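/- Let M and S be the symmetric (N−1)×(N−1) mass and stiffness matrices, I the identity, κ a real constant, and define A = M⊗S + S⊗M + 2I⊗I + κ(I⊗M + M⊗I) and à = M⊗M^{−1} + M^{−1}⊗M + 2I⊗I + κ(I⊗M + M⊗I). Then the eigenspace of Ã^{−1}A for the eigenvalue 1 has dimension at least (N−3)², i.e., the solution space of A·vec(U) = Ã·vec(U) has dimension at least (N−3)². -/

import Mathlib

open Polynomial

/-- The Legendre polynomial of degree `n` (Rodrigues formula). -/
noncomputable def legendre (n : ℕ) : Polynomial ℝ :=
  C ((1 : ℝ) / (2 ^ n * n.factorial)) * derivative^[n] ((X ^ 2 - 1) ^ n)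

/-- `ψ_{m+1}(ξ) = (1/√(2(2m+1))) (L_{m+1}(ξ) − L_{m−1}(ξ))`. -/
noncomputable def psiF (m : ℕ) (x : ℝ) : ℝ :=
  (Real.sqrt (2 * (2 * (m : ℝ) + 1)))⁻¹ *
    ((legendre (m + 1)).eval x - (legendre (m - 1)).eval x)

/-- The normalized Legendre function `φ_m(ξ) = √((2m+1)/2) L_m(ξ)`. -/
noncomputable def phiF (m : ℕ) (x : ℝ) : ℝ :=
  Real.sqrt ((2 * (m : ℝ) + 1) / 2) * (legendre m).eval x

/-- The `(N−1)×(N−1)` mass matrix `M_{mn} = ∫ ψ_{n+1} ψ_{m+1}`,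
with index `i : Fin (N−1)` corresponding to `m = i + 1`. -/
noncomputable def massMatrix (N : ℕ) : Matrix (Fin (N - 1)) (Fin (N - 1)) ℝ :=
  Matrix.of fun i j => ∫ x in (-1 : ℝ)..1, psiF ((j : ℕ) + 1) x * psiF ((i : ℕ) + 1) x

/-- The `(N−1)×(N−1)` stiffness matrix `S_{mn} = ∫ φ_n' φ_m'`. -/
noncomputable def stiffMatrix (N : ℕ) : Matrix (Fin (N - 1)) (Fin (N - 1)) ℝ :=
  Matrix.of fun i j =>
    ∫ x in (-1 : ℝ)..1, deriv (phiF ((j : ℕ) + 1)) x * deriv (phiF ((i : ℕ) + 1)) x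

open scoped Kronecker

/-- `A = M⊗S + S⊗M + 2 I⊗I + κ(I⊗M + M⊗I)` (the 2D divergence-free spectral matrix). -/
noncomputable def matA (N : ℕ) (κ : ℝ) :
    Matrix (Fin (N - 1) × Fin (N - 1)) (Fin (N - 1) × Fin (N - 1)) ℝ :=
  massMatrix N ⊗ₖ stiffMatrix N + stiffMatrix N ⊗ₖ massMatrix N +
    2 • ((1 : Matrix (Fin (N - 1)) (Fin (N - 1)) ℝ) ⊗ₖ 1) +
    κ • ((1 : Matrix (Fin (N - 1)) (Fin (N - 1)) ℝ) ⊗ₖ massMatrix N +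
      massMatrix N ⊗ₖ 1)

/-- `Ã = M⊗M⁻¹ + M⁻¹⊗M + 2 I⊗I + κ(I⊗M + M⊗I)` (the auxiliary preconditioner). -/
noncomputable def matAtilde (N : ℕ) (κ : ℝ) :
    Matrix (Fin (N - 1) × Fin (N - 1)) (Fin (N - 1) × Fin (N - 1)) ℝ :=
  massMatrix N ⊗ₖ (massMatrix N)⁻¹ + (massMatrix N)⁻¹ ⊗ₖ massMatrix N +
    2 • ((1 : Matrix (Fin (N - 1)) (Fin (N - 1)) ℝ) ⊗ₖ 1) +
    κ • ((1 : Matrix (Fin (N - 1)) (Fin (N - 1)) ℝ) ⊗ₖ massMatrix N +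
      massMatrix N ⊗ₖ 1)

/-- The integral over `[-1,1]` of a polynomial, as a linear map. -/
noncomputable def JJ : ℝ[X] →ₗ[ℝ] ℝ where
  toFun p := ∫ x in (-1 : ℝ)..1, p.eval x
  map_add' p q := by
    simp only [eval_add]
    exact intervalIntegral.integral_add (p.continuous.intervalIntegrable _ _)
      (q.continuous.intervalIntegrable _ _)
  map_smul' c p := by
    simp

lemma JJ_apply (p : ℝ[X]) : JJ p = ∫ x in (-1 : ℝ)..1, p.eval x := rfl

lemma JJ_derivative (p : ℝ[X]) : JJ (derivative p) = p.eval 1 - p.eval (-1) := by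
  rw [JJ_apply]
  exact intervalIntegral.integral_eq_sub_of_hasDerivAt (fun x _ => p.hasDerivAt x)
    ((derivative p).continuous.intervalIntegrable _ _)

lemma JJ_parts (p q : ℝ[X]) : JJ (derivative p * q) =
    p.eval 1 * q.eval 1 - p.eval (-1) * q.eval (-1) - JJ (p * derivative q) := by
  have := JJ_derivative (p * q)
  rw [derivative_mul, map_add] at this
  simp only [eval_mul] at this
  linarith

lemma JJ_C_mul (c : ℝ) (p : ℝ[X]) : JJ (C c * p) = c * JJ p := by
  rw [← smul_eq_C_mul, map_smul, smul_eq_mul]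

lemma eval_iter_zero (n k : ℕ) (h : k < n) (x : ℝ) (hx : x ^ 2 = 1) :
    (derivative^[k] ((X ^ 2 - 1 : ℝ[X]) ^ n)).eval x = 0 := by
  obtain ⟨r, hr⟩ := pow_sub_dvd_iterate_derivative_pow (X ^ 2 - 1 : ℝ[X]) n k
  rw [hr]
  have : n - k ≠ 0 := by omega
  simp [hx, this]

lemma JJ_iter_zero (n k : ℕ) (h : k ≤ n) (q : ℝ[X]) (hq : q.degree < k) :
    JJ (derivative^[k] ((X ^ 2 - 1 : ℝ[X]) ^ n) * q) = 0 := by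
  induction k generalizing q with
  | zero =>
    have : q = 0 := by
      rw [← degree_eq_bot]
      simpa using hq
    simp [this]
  | succ k ih =>
    rw [Function.iterate_succ_apply', JJ_parts, eval_iter_zero n k (by omega) 1 (by norm_num),
      eval_iter_zero n k (by omega) (-1) (by norm_num), ih (by omega)]
    · simp
    · by_cases h0 : q = 0
      · simp [h0]
      · have h1 := degree_derivative_lt h0
        have h2 : q.degree ≤ (k : WithBot ℕ) := by
          rw [degree_lt_iff_coeff_zero] at hq
          rw [degree_le_iff_coeff_zero]
          intro m hm
          apply hq
          exact_mod_cast hm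
        exact lt_of_lt_of_le h1 h2

lemma legendre_JJ_zero (n : ℕ) (q : ℝ[X]) (hq : q.degree < n) : JJ (legendre n * q) = 0 := by
  rw [legendre, mul_assoc, JJ_C_mul, JJ_iter_zero n n le_rfl q hq, mul_zero]

lemma legendre_degree (n : ℕ) : (legendre n).degree ≤ n := by
  rw [← natDegree_le_iff_degree_le]
  refine (natDegree_C_mul_le _ _).trans ?_
  refine (natDegree_iterate_derivative _ _).trans ?_
  have : ((X ^ 2 - 1 : ℝ[X]) ^ n).natDegree ≤ n * 2 := by
    refine natDegree_pow_le_of_le n ?_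
    compute_degree
  omega

lemma w_deriv2 (n : ℕ) : derivative^[2] ((X ^ 2 - 1 : ℝ[X]) ^ (n + 2)) =
    C (2 * (n + 2) * (2 * n + 3) : ℝ) * (X ^ 2 - 1) ^ (n + 1) +
    C (4 * (n + 1) * (n + 2) : ℝ) * (X ^ 2 - 1) ^ n := by
  simp only [Function.iterate_succ, Function.iterate_zero, Function.comp, id]
  simp only [derivative_pow, derivative_mul, derivative_sub, derivative_X, derivative_one,
    derivative_C]
  simp [-Polynomial.map_pow]
  have e2 : (C 2 : ℝ[X]) = 2 := rfl
  have e3 : (C 3 : ℝ[X]) = 3 := rfl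
  have e4 : (C 4 : ℝ[X]) = 4 := rfl
  rw [e2, e3, e4]
  ring

lemma legendre_sub (n : ℕ) : legendre (n + 2) - legendre n =
    C ((2 * n + 3 : ℝ) / (2 ^ (n + 1) * (n + 1).factorial)) *
      derivative^[n] ((X ^ 2 - 1 : ℝ[X]) ^ (n + 1)) := by
  unfold legendre
  rw [Function.iterate_add_apply, w_deriv2, iterate_map_add, iterate_derivative_C_mul,
    iterate_derivative_C_mul, mul_add, ← mul_assoc, ← mul_assoc, ← C_mul, ← C_mul]
  have h1 : (1 : ℝ) / (2 ^ (n + 2) * (n + 2).factorial) * (4 * (n + 1) * (n + 2)) =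
      1 / (2 ^ n * n.factorial) := by
    rw [Nat.factorial_succ, Nat.factorial_succ]
    have := Nat.factorial_ne_zero n
    push_cast
    field_simp
    ring
  have h2 : (1 : ℝ) / (2 ^ (n + 2) * (n + 2).factorial) * (2 * (n + 2) * (2 * n + 3)) =
      (2 * n + 3 : ℝ) / (2 ^ (n + 1) * (n + 1).factorial) := by
    rw [Nat.factorial_succ (n + 1)]
    have := Nat.factorial_ne_zero (n + 1)
    push_cast
    field_simp
    ring
  rw [h1, h2]
  ring

lemma legendre_deriv (n : ℕ) : derivative (legendre (n + 2)) - derivative (legendre n) =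
    C (2 * n + 3 : ℝ) * legendre (n + 1) := by
  rw [← derivative_sub, legendre_sub, derivative_C_mul, ← Function.iterate_succ_apply' derivative,
    legendre, ← mul_assoc, ← C_mul]
  congr 2
  ring

lemma legendre_sub_eval (n : ℕ) (x : ℝ) (hx : x ^ 2 = 1) :
    (legendre (n + 2)).eval x = (legendre n).eval x := by
  have := congrArg (eval x) (legendre_sub n)
  rw [eval_sub, eval_mul, eval_iter_zero _ _ (by omega) x hx] at this
  linarith

lemma legendre_zero : legendre 0 = 1 := by simp [legendre]

lemma legendre_one : legendre 1 = X := by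
  simp [legendre]
  rw [← mul_assoc, show (1 + 1 : ℝ[X]) = C 2 by rw [one_add_one_eq_two]; rfl, ← C_mul]
  norm_num

lemma legendre_eval_one (n : ℕ) : (legendre n).eval 1 = 1 := by
  induction n using Nat.twoStepInduction with
  | zero => simp [legendre_zero]
  | one => simp [legendre_one]
  | more n h _ => rw [legendre_sub_eval n 1 (by norm_num), h]

lemma legendre_eval_neg (n : ℕ) : (legendre n).eval (-1) = (-1) ^ n := by
  induction n using Nat.twoStepInduction with
  | zero => simp [legendre_zero]
  | one => simp [legendre_one]
  | more n h _ => rw [legendre_sub_eval n (-1) (by norm_num), h, pow_add]; norm_num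

lemma legendre_ortho (m n : ℕ) (h : m ≠ n) : JJ (legendre m * legendre n) = 0 := by
  rcases lt_or_gt_of_ne h with h | h
  · rw [mul_comm]
    exact legendre_JJ_zero _ _ ((legendre_degree m).trans_lt (by exact_mod_cast h))
  · exact legendre_JJ_zero _ _ ((legendre_degree n).trans_lt (by exact_mod_cast h))

lemma degree_derivative_legendre_lt (n k : ℕ) (h : n ≤ k) :
    (derivative (legendre n)).degree < k := by
  have h0 : legendre n ≠ 0 := by
    intro h0
    have := legendre_eval_one n
    simp [h0] at this
  exact (degree_derivative_lt h0).trans_le ((legendre_degree n).trans (by exact_mod_cast h))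

lemma legendre_norm (n : ℕ) :
    (2 * (n + 1 : ℕ) + 1 : ℝ) * JJ (legendre (n + 1) * legendre (n + 1)) = 2 := by
  have hd := degree_derivative_legendre_lt
  have h1 := JJ_parts (legendre (n + 2)) (legendre (n + 1))
  rw [legendre_JJ_zero (n + 2) _ (hd _ _ (by omega))] at h1
  have h2 := legendre_JJ_zero (n + 1) _ (hd n (n + 1) (by omega))
  have h3 := congrArg (fun p => JJ (p * legendre (n + 1))) (legendre_deriv n)
  simp only [sub_mul, map_sub, mul_assoc, JJ_C_mul] at h3
  rw [mul_comm (derivative (legendre n)), h2, h1] at h3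
  simp only [legendre_eval_one, legendre_eval_neg] at h3
  have h4 : (-1 : ℝ) ^ (n + 2) * (-1) ^ (n + 1) = -1 := by
    rw [← pow_add]
    exact Odd.neg_one_pow ⟨n + 1, by omega⟩
  rw [h4] at h3
  push_cast
  rw [show (2 * ((n : ℝ) + 1) + 1) = 2 * n + 3 by ring, ← h3]
  norm_num

/-- Polynomial version of `phiF`. -/
noncomputable def phP (m : ℕ) : ℝ[X] := C (Real.sqrt ((2 * (m : ℝ) + 1) / 2)) * legendre m

/-- Polynomial version of `psiF`. -/
noncomputable def psP (m : ℕ) : ℝ[X] :=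
  C (Real.sqrt (2 * (2 * (m : ℝ) + 1)))⁻¹ * (legendre (m + 1) - legendre (m - 1))

lemma phiF_eq (m : ℕ) : phiF m = fun x => (phP m).eval x := by
  ext x; simp [phiF, phP]

lemma psiF_eq (m : ℕ) : psiF m = fun x => (psP m).eval x := by
  ext x; simp [psiF, psP]

lemma deriv_phiF (m : ℕ) (x : ℝ) : deriv (phiF m) x = (derivative (phP m)).eval x := by
  rw [phiF_eq, Polynomial.deriv]

lemma mass_apply (N : ℕ) (i j : Fin (N - 1)) :
    massMatrix N i j = JJ (psP (j + 1) * psP (i + 1)) := by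
  simp [massMatrix, JJ_apply, psiF_eq]

lemma stiff_apply (N : ℕ) (i j : Fin (N - 1)) :
    stiffMatrix N i j = JJ (derivative (phP (j + 1)) * derivative (phP (i + 1))) := by
  simp [stiffMatrix, JJ_apply, deriv_phiF]

lemma ps_deriv (m : ℕ) : derivative (psP (m + 1)) = phP (m + 1) := by
  rw [psP, derivative_C_mul, derivative_sub, Nat.add_sub_cancel, legendre_deriv, phP, ← mul_assoc,
    ← C_mul]
  congr 2
  push_cast
  have h : (0 : ℝ) < 2 * (m + 1) + 1 := by positivity
  set a : ℝ := 2 * (m + 1) + 1 with ha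
  rw [show (2 * m + 3 : ℝ) = a by rw [ha]; ring, Real.sqrt_mul (by norm_num),
    Real.sqrt_div h.le]
  have h2 : Real.sqrt 2 ≠ 0 := by positivity
  have h3 : Real.sqrt a ≠ 0 := by positivity
  field_simp
  rw [Real.sq_sqrt h.le]

lemma ps_eval (m : ℕ) (x : ℝ) (hx : x ^ 2 = 1) : (psP (m + 1)).eval x = 0 := by
  rw [psP, Nat.add_sub_cancel]
  simp [legendre_sub_eval m x hx]

lemma ph_ortho (m n : ℕ) : JJ (phP (m + 1) * phP (n + 1)) = if m = n then 1 else 0 := by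
  have h : phP (m + 1) * phP (n + 1) = C (Real.sqrt ((2 * ((m + 1 : ℕ) : ℝ) + 1) / 2) *
      Real.sqrt ((2 * ((n + 1 : ℕ) : ℝ) + 1) / 2)) * (legendre (m + 1) * legendre (n + 1)) := by
    rw [phP, phP, C_mul]; ring
  rw [h, JJ_C_mul]
  split_ifs with hmn
  · subst hmn
    rw [Real.mul_self_sqrt (by positivity)]
    have := legendre_norm m
    linarith
  · rw [legendre_ortho _ _ (by omega), mul_zero]

/-- Integration by parts against `ψ`. -/
lemma ps_parts (m : ℕ) (q : ℝ[X]) : JJ (psP (m + 1) * derivative q) = - JJ (phP (m + 1) * q) := by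
  have := JJ_parts (psP (m + 1)) q
  rw [ps_deriv, ps_eval m 1 (by norm_num), ps_eval m (-1) (by norm_num)] at this
  linarith

/-- Span of `φ_1, …, φ_K`. -/
noncomputable def phSpan (K : ℕ) : Submodule ℝ ℝ[X] :=
  Submodule.span ℝ (Set.range fun k : Fin K => phP (k + 1))

lemma legendre_mem (K m : ℕ) (h : m < K) : legendre (m + 1) ∈ phSpan K := by
  have h1 : phP (m + 1) ∈ phSpan K := Submodule.subset_span ⟨⟨m, h⟩, rfl⟩
  have h2 : (0 : ℝ) < Real.sqrt ((2 * ((m + 1 : ℕ) : ℝ) + 1) / 2) := by positivity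
  have h3 := (phSpan K).smul_mem (Real.sqrt ((2 * ((m + 1 : ℕ) : ℝ) + 1) / 2))⁻¹ h1
  rwa [phP, ← smul_eq_C_mul, smul_smul, inv_mul_cancel₀ h2.ne', one_smul] at h3

lemma legendre_antideriv (K m : ℕ) (h : m < K) :
    ∃ q ∈ phSpan K, derivative q = legendre m := by
  rcases m with _ | _ | m
  · exact ⟨_, legendre_mem K 0 h, by simp [legendre_one, legendre_zero]⟩
  · refine ⟨(3 : ℝ)⁻¹ • legendre 2, Submodule.smul_mem _ _ (legendre_mem K 1 h), ?_⟩
    have := legendre_deriv 0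
    simp only [legendre_zero, derivative_one, sub_zero, zero_add] at this
    rw [derivative_smul, this, ← smul_eq_C_mul, smul_smul]
    norm_num
  · refine ⟨(2 * ((m + 1 : ℕ) : ℝ) + 3)⁻¹ • (legendre (m + 3) - legendre (m + 1)),
      Submodule.smul_mem _ _ (Submodule.sub_mem _ (legendre_mem K (m + 2) h)
        (legendre_mem K m (by omega))), ?_⟩
    have := legendre_deriv (m + 1)
    rw [derivative_smul, derivative_sub, this, ← smul_eq_C_mul, smul_smul,
      inv_mul_cancel₀ (by positivity), one_smul]

lemma ps_antideriv (K m : ℕ) (h : m + 2 < K) :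
    ∃ q ∈ phSpan K, derivative q = psP (m + 1) := by
  obtain ⟨q1, h1, d1⟩ := legendre_antideriv K (m + 2) h
  obtain ⟨q2, h2, d2⟩ := legendre_antideriv K m (by omega)
  refine ⟨(Real.sqrt (2 * (2 * ((m + 1 : ℕ) : ℝ) + 1)))⁻¹ • (q1 - q2),
    Submodule.smul_mem _ _ (Submodule.sub_mem _ h1 h2), ?_⟩
  rw [derivative_smul, derivative_sub, d1, d2, psP, smul_eq_C_mul, Nat.add_sub_cancel]

lemma ph_expand (K : ℕ) (q : ℝ[X]) (hq : q ∈ phSpan K) :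
    q = ∑ k : Fin K, JJ (phP (k + 1) * q) • phP (k + 1) := by
  obtain ⟨c, rfl⟩ := (Submodule.mem_span_range_iff_exists_fun ℝ).1 hq
  refine Finset.sum_congr rfl fun k _ => ?_
  congr 1
  simp only [Finset.mul_sum, map_sum, mul_smul_comm, map_smul, ph_ortho, smul_eq_mul]
  simp [Fin.val_inj]

/-- The first `N-3` columns of `SM - I` vanish. -/
lemma SM_col (N : ℕ) (i j : Fin (N - 1)) (hj : (j : ℕ) < N - 3) :
    (stiffMatrix N * massMatrix N) i j = (1 : Matrix (Fin (N - 1)) (Fin (N - 1)) ℝ) i j := by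
  obtain ⟨q, hq, dq⟩ := ps_antideriv (N - 1) j (by omega)
  have hM : ∀ k, massMatrix N k j = - JJ (phP (k + 1) * q) := by
    intro k
    rw [mass_apply, ← ps_parts, dq, mul_comm]
  have h1 : derivative q = ∑ k : Fin (N - 1), JJ (phP (k + 1) * q) • derivative (phP (k + 1)) := by
    conv_lhs => rw [ph_expand _ q hq]
    rw [derivative_sum]
    simp only [derivative_smul]
  have h2 : JJ (derivative q * derivative (phP (i + 1))) =
      - (stiffMatrix N * massMatrix N) i j := by
    rw [h1, Finset.sum_mul, map_sum, Matrix.mul_apply, ← Finset.sum_neg_distrib]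
    refine Finset.sum_congr rfl fun k _ => ?_
    rw [smul_mul_assoc, map_smul, hM, stiff_apply, smul_eq_mul]
    ring
  rw [dq, ps_parts, ph_ortho] at h2
  rw [Matrix.one_apply, ← neg_inj, ← h2]
  congr 1
  simp [Fin.val_inj, eq_comm]

lemma JJ_sq_eq_zero (p : ℝ[X]) (h : JJ (p * p) = 0) : p = 0 := by
  by_contra hp
  have h0 : ∀ x ∈ Set.Icc (-1 : ℝ) 1, p.eval x = 0 := by
    intro x hx
    by_contra hne
    have : 0 < ∫ x in (-1 : ℝ)..1, (p * p).eval x := by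
      refine intervalIntegral.integral_pos (by norm_num) ((p * p).continuous.continuousOn) ?_
        ⟨x, hx, ?_⟩
      · intro y _
        rw [eval_mul]; exact mul_self_nonneg _
      · rw [eval_mul]; exact mul_self_pos.2 hne
    rw [JJ_apply] at h
    linarith
  exact hp (eq_zero_of_infinite_isRoot p
    ((Set.Icc_infinite (by norm_num : (-1 : ℝ) < 1)).mono h0))

lemma mass_isUnit (N : ℕ) : IsUnit (massMatrix N) := by
  rw [← Matrix.mulVec_injective_iff_isUnit]
  rw [← Matrix.coe_mulVecLin, injective_iff_map_eq_zero]
  intro v hv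
  rw [Matrix.mulVecLin_apply] at hv
  set p : ℝ[X] := ∑ k : Fin (N - 1), v k • psP (k + 1) with hp
  have h1 : JJ (p * p) = 0 := by
    have : JJ (p * p) = ∑ i, v i * (massMatrix N).mulVec v i := by
      simp only [hp, Finset.sum_mul, Finset.mul_sum, map_sum, Matrix.mulVec, dotProduct,
        mass_apply, smul_mul_smul_comm, map_smul, smul_eq_mul]
      refine Finset.sum_congr rfl fun i _ => Finset.sum_congr rfl fun j _ => ?_
      rw [mul_comm (psP _)]; ring
    rw [this, hv]; simp
  have h2 := congrArg derivative (JJ_sq_eq_zero p h1)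
  rw [hp, derivative_sum] at h2
  simp only [derivative_smul, ps_deriv, derivative_zero] at h2
  ext k
  have h3 := congrArg (fun r => JJ (r * phP (k + 1))) h2
  simpa [Finset.sum_mul, ph_ortho, Fin.val_inj] using h3

lemma diff_eq (N : ℕ) (κ : ℝ) : matA N κ - matAtilde N κ =
    massMatrix N ⊗ₖ (stiffMatrix N - (massMatrix N)⁻¹) +
      (stiffMatrix N - (massMatrix N)⁻¹) ⊗ₖ massMatrix N := by
  unfold matA matAtilde
  ext ⟨i, i2⟩ ⟨j, j2⟩
  simp only [Matrix.sub_apply, Matrix.add_apply, Matrix.smul_apply, Matrix.kroneckerMap_apply]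
  ring

lemma col_zero (N : ℕ) (κ : ℝ) (i : Fin (N - 1) × Fin (N - 1)) (j k : Fin (N - 1))
    (hj : (j : ℕ) < N - 3) (hk : (k : ℕ) < N - 3) :
    ((matA N κ - matAtilde N κ) * (massMatrix N ⊗ₖ massMatrix N)) i (j, k) = 0 := by
  have hu := (Matrix.isUnit_iff_isUnit_det _).1 (mass_isUnit N)
  have hc : ∀ a b : Fin (N - 1), (b : ℕ) < N - 3 →
      ((stiffMatrix N - (massMatrix N)⁻¹) * massMatrix N) a b = 0 := by
    intro a b hb
    rw [Matrix.sub_mul, Matrix.nonsing_inv_mul _ hu, Matrix.sub_apply, SM_col N a b hb, sub_self]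
  rw [diff_eq, Matrix.add_mul, ← Matrix.mul_kronecker_mul, ← Matrix.mul_kronecker_mul,
    Matrix.add_apply, Matrix.kronecker_apply, Matrix.kronecker_apply, hc _ _ hj, hc _ _ hk]
  simp

/-- The solution space of `A·vec(U) = Ã·vec(U)`, i.e. the eigenspace of `Ã⁻¹A` for the
eigenvalue `1`, has dimension at least `(N−3)²`. -/
theorem eigenspace_one_dim_ge (N : ℕ) (hN : 4 ≤ N) (κ : ℝ) :
    (N - 3) ^ 2 ≤
      Module.finrank ℝ ↥(LinearMap.ker (Matrix.toLin' (matA N κ - matAtilde N κ))) := by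
  have hu : IsUnit (massMatrix N ⊗ₖ massMatrix N) := by
    have hd := (Matrix.isUnit_iff_isUnit_det _).1 (mass_isUnit N)
    rw [Matrix.isUnit_iff_isUnit_det, Matrix.det_kronecker]
    exact (hd.pow _).mul (hd.pow _)
  have hli := Matrix.linearIndependent_cols_of_isUnit hu
  let e : Fin (N - 3) → Fin (N - 1) := Fin.castLE (by omega)
  have he : Function.Injective e := Fin.castLE_injective _
  have hli2 := hli.comp (Prod.map e e) (he.prodMap he)
  let f : Fin (N - 3) × Fin (N - 3) →
      ↥(LinearMap.ker (Matrix.toLin' (matA N κ - matAtilde N κ))) := fun jk =>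
    ⟨(massMatrix N ⊗ₖ massMatrix N).col (Prod.map e e jk), by
      rw [LinearMap.mem_ker, Matrix.toLin'_apply]
      ext i
      exact col_zero N κ i (e jk.1) (e jk.2) jk.1.2 jk.2.2⟩
  have hf : LinearIndependent ℝ f :=
    LinearIndependent.of_comp (LinearMap.ker (Matrix.toLin' (matA N κ - matAtilde N κ))).subtype hli2
  have := hf.fintype_card_le_finrank
  simpa [sq] using this
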